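/- arXiv:1805.03382 — 2 statements merged into one kernel-verified Lean document; each statement's English description precedes it below -/
import Mathlib

section
/- Let c > 4/3, p3 = (2c)/3 − (1/3)*sqrt(c*(c−1)), and xD = (2c)/3 − (1/3)*sqrt(c*(c−1)) − (1/3)*sqrt(c/(c−1)). Let R3 = {v ∈ T : v1 + v2 − p3 ≥ 0 and v1 + v2 − p3 ≥ v1/c + v2 − 2/3}, let ν+ be the pushforward of the measure (2/c)·(Lebesgue measure on the interval [xD, c]) under the map t ↦ (t, 1 − t/c), and let ν− be (6/c) times Lebesgue measure restricted to R3. Then there exists a nonnegative measure γ on R3 × R3 whose first marginal is ν+ and whose second marginal is ν−, and which is supported on the set {(v, v') : v1 ≥ v'1 and v2 ≥ v'2}. (In transport language: the mass of ν+ can be moved to ν− so that mass only moves weakly downward and weakly leftward.) -/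
open MeasureTheory Real

noncomputable section

/-- The triangle `T = {(v₁,v₂) : v₁ ≥ 0, v₂ ≥ 0, v₁/c + v₂ ≤ 1}`. -/
def Tri (c : ℝ) : Set (ℝ × ℝ) := {v | 0 ≤ v.1 ∧ 0 ≤ v.2 ∧ v.1 / c + v.2 ≤ 1}

/-!
The coupling is induced by a map from `R₃` to the hypotenuse, going up and to the right: with
`κ = c + √(c (c - 1))`, the point `v` comes from the point of the hypotenuse with abscissa
`T v = max v₁ (c - κ v₂)`. Every `v ∈ R₃` lies weakly below and to the left of that point because
`c ≤ κ`, so it only remains to see that `T` pushes the area of `R₃` forward to one third of the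
length on `[x_D, c]`, that is, that `{v ∈ R₃ : T v ≤ t}` has area `(t - x_D) / 3`. This area is a
quadratic polynomial in `t - x_D`. Its linear coefficient is the length `1 / 3` of the left edge of
`R₃`, and its quadratic coefficient vanishes because `κ` is a root of `κ² - 2 c κ + c`.
-/

open Set
open scoped ENNReal

section Measure

variable {α β : Type*} [MeasurableSpace α] [MeasurableSpace β]

lemma exists_coupling_map_left {μ : Measure β} {f : β → α} (hf : Measurable f) {P : α × β → Prop}
    (hP : MeasurableSet {w | P w}) (h : ∀ᵐ y ∂μ, P (f y, y)) :
    ∃ γ : Measure (α × β), γ.map Prod.fst = μ.map f ∧ γ.map Prod.snd = μ ∧ ∀ᵐ w ∂γ, P w := by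
  have hgraph : Measurable fun y => (f y, y) := hf.prodMk measurable_id
  refine ⟨μ.map fun y => (f y, y), ?_, ?_, (ae_map_iff hgraph.aemeasurable hP).2 h⟩
  · exact Measure.map_map measurable_fst hgraph
  · exact (Measure.map_map measurable_snd hgraph).trans Measure.map_id

lemma prod_volume_region_between_cc_eq_lintegral (μ : Measure α) {f g : α → ℝ} {s : Set α}
    (hf : Measurable f) (hg : Measurable g) (hs : MeasurableSet s) :
    μ.prod volume {p : α × ℝ | p.1 ∈ s ∧ p.2 ∈ Icc (f p.1) (g p.1)} =
      ∫⁻ x in s, ENNReal.ofReal (g x - f x) ∂μ := by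
  rw [Measure.prod_apply (measurableSet_region_between_cc hf hg hs), ← lintegral_indicator hs]
  congr 1 with x
  by_cases hx : x ∈ s
  · rw [indicator_of_mem hx, ← Real.volume_Icc]
    congr 1 with y
    simp [hx]
  · simp [hx]

lemma volume_region_between_cc_eq_ofReal_integral {a b : ℝ} (hab : a ≤ b) {f g : ℝ → ℝ}
    (hf : Continuous f) (hg : Continuous g) (hfg : ∀ x ∈ Icc a b, f x ≤ g x) :
    volume {p : ℝ × ℝ | p.1 ∈ Icc a b ∧ p.2 ∈ Icc (f p.1) (g p.1)} =
      ENNReal.ofReal (∫ x in a..b, (g x - f x)) := by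
  rw [Measure.volume_eq_prod,
    prod_volume_region_between_cc_eq_lintegral _ hf.measurable hg.measurable measurableSet_Icc,
    intervalIntegral.integral_of_le hab, ← integral_Icc_eq_integral_Ioc,
    ofReal_integral_eq_lintegral_ofReal (f := fun x => g x - f x) (hg.sub hf).integrableOn_Icc]
  filter_upwards [ae_restrict_mem measurableSet_Icc] with x hx
  exact sub_nonneg.2 (hfg x hx)

lemma eq_smul_volume_restrict_Icc {μ : Measure ℝ} {a b : ℝ} {k : ℝ≥0∞} (hab : a ≤ b) (hk : k ≠ ∞)
    (hμ : ∀ᵐ x ∂μ, x ∈ Icc a b) (hcdf : ∀ t ∈ Icc a b, μ (Iic t) = k * ENNReal.ofReal (t - a)) :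
    μ = k • volume.restrict (Icc a b) := by
  have hIic (t : ℝ) : μ (Iic t) = μ (Iic (min t b)) := by
    refine measure_congr ?_
    filter_upwards [hμ] with x hx
    exact propext ⟨fun h => le_min h hx.2, fun h => le_trans h (min_le_left t b)⟩
  have : IsFiniteMeasure μ := by
    have huniv : μ univ = μ (Iic b) := by
      refine measure_congr ?_
      filter_upwards [hμ] with x hx
      exact propext ⟨fun _ => hx.2, fun _ => trivial⟩
    refine ⟨?_⟩
    rw [huniv, hcdf b ⟨hab, le_rfl⟩]
    exact ENNReal.mul_lt_top hk.lt_top ENNReal.ofReal_lt_top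
  refine Measure.ext_of_Iic μ _ fun t => ?_
  have hinter : Iic t ∩ Icc a b = Icc a (min t b) := by
    ext x
    simp only [mem_inter_iff, mem_Iic, mem_Icc, le_min_iff]
    tauto
  rw [Measure.smul_apply, Measure.restrict_apply measurableSet_Iic, hinter, Real.volume_Icc,
    smul_eq_mul]
  rcases le_or_gt a t with hat | hta
  · rw [hIic, hcdf _ ⟨le_min hat hab, min_le_right t b⟩]
  · have hnull : μ (Iic t) = 0 := by
      refine measure_mono_null (fun x hx => ?_) hμ
      exact fun hmem => absurd (hmem.1.trans hx) hta.not_ge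
    rw [hnull, ENNReal.ofReal_of_nonpos (by linarith [min_le_left t b]), mul_zero]

end Measure

lemma integral_max_sub_zero {a m t : ℝ} (ham : a ≤ m) (hmt : m ≤ t) :
    ∫ x in a..t, max (m - x) 0 = (m - a) ^ 2 / 2 := by
  have hint (u w : ℝ) : IntervalIntegrable (fun x => max (m - x) 0) volume u w :=
    (by fun_prop : Continuous fun x => max (m - x) 0).intervalIntegrable u w
  have hleft : ∫ x in a..m, max (m - x) 0 = ∫ x in a..m, (m - x) := by
    refine intervalIntegral.integral_congr fun x hx => max_eq_left ?_
    rw [uIcc_of_le ham] at hx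
    exact sub_nonneg.2 hx.2
  have hright : ∫ x in m..t, max (m - x) 0 = ∫ _ in m..t, (0 : ℝ) := by
    refine intervalIntegral.integral_congr fun x hx => max_eq_right ?_
    rw [uIcc_of_le hmt] at hx
    exact sub_nonpos.2 hx.1
  rw [← intervalIntegral.integral_add_adjacent_intervals (hint a m) (hint m t), hleft, hright,
    intervalIntegral.integral_comp_sub_left (fun x => x)]
  simp

/-- The part of the triangle `Tri c` to the right of `v₁ = a` and above the line of slope `-1`
through the corner `(a, b)`. This is the shape of the region `R₃`, where the line is
`v₁ + v₂ = p₃`. The condition `0 ≤ v₁` is left out, as it follows from `a ≤ v₁` when `0 ≤ a`. -/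
def bundleRegion (c a b : ℝ) : Set (ℝ × ℝ) :=
  {v | a ≤ v.1 ∧ 0 ≤ v.2 ∧ a + b ≤ v.1 + v.2 ∧ v.1 / c + v.2 ≤ 1}

/-- The abscissa of the point of the hypotenuse from which the mass at `v` is taken. -/
def sourceAbscissa (c κ : ℝ) (v : ℝ × ℝ) : ℝ := max v.1 (c - κ * v.2)

lemma measurableSet_bundleRegion (c a b : ℝ) : MeasurableSet (bundleRegion c a b) := by
  unfold bundleRegion
  measurability

lemma measurable_sourceAbscissa (c κ : ℝ) : Measurable (sourceAbscissa c κ) := by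
  unfold sourceAbscissa
  fun_prop

lemma setOf_bundle_preferred_eq_bundleRegion {c a b r : ℝ} (hc : 1 < c) (ha : 0 ≤ a)
    (hr : a / c + b = r) :
    {v ∈ Tri c | 0 ≤ v.1 + v.2 - (a + b) ∧ v.1 / c + v.2 - r ≤ v.1 + v.2 - (a + b)} =
      bundleRegion c a b := by
  ext v
  have hindifference : v.1 / c + v.2 - r ≤ v.1 + v.2 - (a + b) ↔ a ≤ v.1 := by
    have hgap : v.1 + v.2 - (a + b) - (v.1 / c + v.2 - r) = (v.1 - a) * (1 - 1 / c) := by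
      rw [← hr]
      ring
    have hslope : 0 < 1 - 1 / c := sub_pos.2 ((div_lt_one (by linarith)).2 hc)
    rw [← sub_nonneg, hgap, mul_nonneg_iff_of_pos_right hslope, sub_nonneg]
  simp only [Tri, bundleRegion, mem_ofPred_eq, hindifference, sub_nonneg]
  exact ⟨fun ⟨⟨_, h2, h3⟩, h4, h5⟩ => ⟨h5, h2, h4, h3⟩,
    fun ⟨h5, h2, h4, h3⟩ => ⟨⟨ha.trans h5, h2, h3⟩, h4, h5⟩⟩

section Transport

variable {c κ a b : ℝ}

lemma one_le_of_sq_add_eq (hκ : 1 ≤ κ) (hroot : κ ^ 2 + c = 2 * c * κ) : 1 ≤ c := by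
  nlinarith [sq_nonneg (κ - 1)]

lemma le_of_sq_add_eq (hκ : 1 ≤ κ) (hroot : κ ^ 2 + c = 2 * c * κ) : c ≤ κ := by
  nlinarith [one_le_of_sq_add_eq hκ hroot]

lemma snd_le_one_sub_sourceAbscissa_div (hcκ : c ≤ κ) (hc : 0 < c) {v : ℝ × ℝ}
    (hv : v ∈ bundleRegion c a b) : v.2 ≤ 1 - sourceAbscissa c κ v / c := by
  obtain ⟨-, hv2, -, hhyp⟩ := hv
  suffices h : sourceAbscissa c κ v ≤ c * (1 - v.2) by
    have := (div_le_iff₀' hc).2 h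
    linarith
  refine max_le ?_ ?_
  · exact (div_le_iff₀' hc).1 (by linarith)
  · linarith [mul_le_mul_of_nonneg_right hcκ hv2]

lemma sourceAbscissa_mem_Icc (hcκ : c ≤ κ) (hc : 0 < c) {v : ℝ × ℝ}
    (hv : v ∈ bundleRegion c a b) : sourceAbscissa c κ v ∈ Icc a c := by
  refine ⟨hv.1.trans (le_max_left _ _), (div_le_one hc).1 ?_⟩
  linarith [snd_le_one_sub_sourceAbscissa_div hcκ hc hv, hv.2.1]

lemma hypotenuse_mem_bundleRegion {v : ℝ × ℝ} {t : ℝ} (hv : v ∈ bundleRegion c a b)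
    (h1 : v.1 ≤ t) (h2 : v.2 ≤ 1 - t / c) : (t, 1 - t / c) ∈ bundleRegion c a b := by
  obtain ⟨hav, hv2, hsum, -⟩ := hv
  exact ⟨hav.trans h1, hv2.trans h2, hsum.trans (add_le_add h1 h2), by simp⟩

lemma sourceAbscissa_preimage_Iic_inter (hκ : 0 < κ) {t : ℝ} (ht : t ≤ c) :
    sourceAbscissa c κ ⁻¹' Iic t ∩ bundleRegion c a b =
      {v | v.1 ∈ Icc a t ∧ v.2 ∈ Icc (max (a + b - v.1) ((c - t) / κ)) (1 - v.1 / c)} := by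
  ext v
  have hlevel : c - κ * v.2 ≤ t ↔ (c - t) / κ ≤ v.2 := by
    rw [div_le_iff₀' hκ, sub_le_comm]
  have hnonneg : 0 ≤ (c - t) / κ := div_nonneg (sub_nonneg.2 ht) hκ.le
  simp only [sourceAbscissa, bundleRegion, mem_inter_iff, mem_preimage, mem_Iic, mem_ofPred_eq,
    mem_Icc, max_le_iff, hlevel, sub_le_iff_le_add', le_sub_iff_add_le']
  exact ⟨fun ⟨⟨h1, h2⟩, h3, _, h5, h6⟩ => ⟨⟨h3, h1⟩, ⟨h5, h2⟩, h6⟩,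
    fun ⟨⟨h3, h1⟩, ⟨h5, h2⟩, h6⟩ => ⟨⟨h1, h2⟩, h3, hnonneg.trans h2, h5, h6⟩⟩

lemma integral_sublevel_height (hκ : 1 ≤ κ) (hroot : κ ^ 2 + c = 2 * c * κ)
    (hcorner : c - a = κ * b) {t : ℝ} (hat : a ≤ t) :
    ∫ x in a..t, (1 - x / c - max (a + b - x) ((c - t) / κ)) = (1 - a / c - b) * (t - a) := by
  have hκ0 : 0 < κ := by linarith
  have hc : 0 < c := by linarith [one_le_of_sq_add_eq hκ hroot]
  have hlevel : (c - t) / κ = b - (t - a) / κ := by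
    field_simp
    linear_combination hcorner
  have hheight (x : ℝ) : 1 - x / c - max (a + b - x) ((c - t) / κ) =
      (1 - b + (t - a) / κ - x / c) - max (a + (t - a) / κ - x) 0 := by
    have hmax : max (a + b - x) ((c - t) / κ) =
        max (a + (t - a) / κ - x) 0 + (b - (t - a) / κ) := by
      rw [hlevel, ← max_add_add_right]
      ring_nf
    rw [hmax]
    ring
  have hstep : (t - a) / κ ≤ t - a := div_le_self (sub_nonneg.2 hat) hκ
  have hκinv : 1 / c + (1 / κ) ^ 2 = 2 * (1 / κ) := by
    field_simp
    linear_combination hroot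
  simp only [hheight]
  rw [intervalIntegral.integral_sub (Continuous.intervalIntegrable (by fun_prop) _ _)
      (Continuous.intervalIntegrable (by fun_prop) _ _),
    intervalIntegral.integral_sub (Continuous.intervalIntegrable (by fun_prop) _ _)
      (Continuous.intervalIntegrable (by fun_prop) _ _),
    integral_max_sub_zero (by linarith [div_nonneg (sub_nonneg.2 hat) hκ0.le]) (by linarith),
    intervalIntegral.integral_const, intervalIntegral.integral_div, integral_id, smul_eq_mul]
  linear_combination (-(t - a) ^ 2 / 2) * hκinv

lemma volume_sourceAbscissa_preimage_Iic_inter (hκ : 1 ≤ κ) (hroot : κ ^ 2 + c = 2 * c * κ)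
    (hcorner : c - a = κ * b) (hb : 0 ≤ b) {t : ℝ} (ht : t ∈ Icc a c) :
    volume (sourceAbscissa c κ ⁻¹' Iic t ∩ bundleRegion c a b) =
      ENNReal.ofReal ((1 - a / c - b) * (t - a)) := by
  have hκ0 : 0 < κ := by linarith
  have hc1 : 1 ≤ c := one_le_of_sq_add_eq hκ hroot
  have hcκ : c ≤ κ := le_of_sq_add_eq hκ hroot
  have hc : 0 < c := by linarith
  rw [sourceAbscissa_preimage_Iic_inter hκ0 ht.2,
    ← integral_sublevel_height hκ hroot hcorner ht.1]
  refine volume_region_between_cc_eq_ofReal_integral (f := fun x => max (a + b - x) ((c - t) / κ))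
    (g := fun x => 1 - x / c) ht.1 (by fun_prop) (by fun_prop) fun x hx => max_le ?_ ?_
  · have hleft : b ≤ 1 - a / c := by
      have : b ≤ (c - a) / c := by
        rw [le_div_iff₀' hc, hcorner]
        exact mul_le_mul_of_nonneg_right hcκ hb
      rwa [sub_div, div_self hc.ne'] at this
    have hslope : (x - a) / c ≤ x - a := div_le_self (sub_nonneg.2 hx.1) hc1
    rw [sub_div] at hslope
    linarith
  · calc (c - t) / κ ≤ (c - t) / c := div_le_div_of_nonneg_left (sub_nonneg.2 ht.2) hc hcκ
      _ ≤ (c - x) / c := by gcongr; exact hx.2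
      _ = 1 - x / c := by rw [sub_div, div_self hc.ne']

lemma map_sourceAbscissa_volume_restrict (hκ : 1 ≤ κ) (hroot : κ ^ 2 + c = 2 * c * κ)
    (hcorner : c - a = κ * b) (hb : 0 ≤ b) :
    (volume.restrict (bundleRegion c a b)).map (sourceAbscissa c κ) =
      ENNReal.ofReal (1 - a / c - b) • volume.restrict (Icc a c) := by
  have hmeas := measurable_sourceAbscissa c κ
  have hc : 0 < c := by linarith [one_le_of_sq_add_eq hκ hroot]
  have hcκ : c ≤ κ := le_of_sq_add_eq hκ hroot
  refine eq_smul_volume_restrict_Icc ?_ ENNReal.ofReal_ne_top ?_ fun t ht => ?_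
  · exact sub_nonneg.1 (hcorner ▸ mul_nonneg (by linarith) hb)
  · refine (ae_map_iff hmeas.aemeasurable measurableSet_Icc).2 ?_
    filter_upwards [ae_restrict_mem (measurableSet_bundleRegion c a b)] with v hv
    exact sourceAbscissa_mem_Icc hcκ hc hv
  · rw [Measure.map_apply hmeas measurableSet_Iic,
      Measure.restrict_apply (hmeas measurableSet_Iic),
      volume_sourceAbscissa_preimage_Iic_inter hκ hroot hcorner hb ht,
      ENNReal.ofReal_mul' (sub_nonneg.2 ht.1)]

theorem exists_monotone_transport_bundleRegion (hκ : 1 ≤ κ) (hroot : κ ^ 2 + c = 2 * c * κ)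
    (hcorner : c - a = κ * b) (hb : 0 ≤ b) (k : ℝ≥0∞) :
    ∃ γ : Measure ((ℝ × ℝ) × (ℝ × ℝ)),
      γ.map Prod.fst = Measure.map (fun t : ℝ => (t, 1 - t / c))
        ((k * ENNReal.ofReal (1 - a / c - b)) • volume.restrict (Icc a c)) ∧
      γ.map Prod.snd = k • volume.restrict (bundleRegion c a b) ∧
      ∀ᵐ w ∂γ, w.1 ∈ bundleRegion c a b ∧ w.2 ∈ bundleRegion c a b ∧
        w.2.1 ≤ w.1.1 ∧ w.2.2 ≤ w.1.2 := by
  have hc : 0 < c := by linarith [one_le_of_sq_add_eq hκ hroot]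
  have hcκ : c ≤ κ := le_of_sq_add_eq hκ hroot
  have hR := measurableSet_bundleRegion c a b
  have hT := measurable_sourceAbscissa c κ
  have hedge : Measurable fun t : ℝ => (t, 1 - t / c) := by fun_prop
  rw [mul_smul, ← map_sourceAbscissa_volume_restrict hκ hroot hcorner hb, ← Measure.map_smul,
    Measure.map_map hedge hT]
  refine exists_coupling_map_left (hedge.comp hT) ?_ (Measure.ae_smul_measure ?_ k)
  · exact (measurable_fst hR).inter ((measurable_snd hR).inter
      (measurableSet_le measurable_snd measurable_fst))
  · filter_upwards [ae_restrict_mem hR] with v hv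
    have hright : v.1 ≤ sourceAbscissa c κ v := le_max_left _ _
    have hup := snd_le_one_sub_sourceAbscissa_div hcκ hc hv
    exact ⟨hypotenuse_mem_bundleRegion hv hright hup, hv, hright, hup⟩

end Transport

section Parameters

variable {c : ℝ}

lemma sqrt_div_sub_one_mul_sub_one (hc : 1 < c) : √(c / (c - 1)) * (c - 1) = √(c * (c - 1)) := by
  have hc1 : 0 < c - 1 := by linarith
  rw [show c * (c - 1) = c / (c - 1) * (c - 1) ^ 2 by field_simp, Real.sqrt_mul (by positivity),
    Real.sqrt_sq hc1.le]

lemma sqrt_mul_sub_one_mul_sqrt_div_sub_one (hc : 1 < c) :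
    √(c * (c - 1)) * √(c / (c - 1)) = c := by
  have hc1 : 0 < c - 1 := by linarith
  rw [← Real.sqrt_mul (by positivity), show c * (c - 1) * (c / (c - 1)) = c ^ 2 by field_simp,
    Real.sqrt_sq (by linarith)]

lemma sqrt_div_sub_one_lt_two (hc : 4 / 3 < c) : √(c / (c - 1)) < 2 := by
  rw [Real.sqrt_lt' two_pos, div_lt_iff₀ (by linarith)]
  linarith

lemma add_sqrt_sq_add_eq (hc : 1 ≤ c) :
    (c + √(c * (c - 1))) ^ 2 + c = 2 * c * (c + √(c * (c - 1))) := by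
  have hsq : √(c * (c - 1)) ^ 2 = c * (c - 1) :=
    Real.sq_sqrt (mul_nonneg (by linarith) (by linarith))
  linear_combination hsq

/-- The abscissa `x_D` of the left edge of `R₃`; the lower end of that edge is
`(cornerAbscissa c, √(c / (c - 1)) / 3)`. -/
def cornerAbscissa (c : ℝ) : ℝ := 2 * c / 3 - √(c * (c - 1)) / 3 - √(c / (c - 1)) / 3

lemma cornerAbscissa_eq_mul_two_sub (hc : 1 < c) :
    cornerAbscissa c = c * (2 - √(c / (c - 1))) / 3 := by
  unfold cornerAbscissa
  linear_combination sqrt_div_sub_one_mul_sub_one hc / 3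

lemma cornerAbscissa_nonneg (hc : 4 / 3 < c) : 0 ≤ cornerAbscissa c := by
  have hfactor : 0 ≤ 2 - √(c / (c - 1)) := sub_nonneg.2 (sqrt_div_sub_one_lt_two hc).le
  rw [cornerAbscissa_eq_mul_two_sub (by linarith)]
  positivity

lemma cornerAbscissa_div_add (hc : 1 < c) :
    cornerAbscissa c / c + √(c / (c - 1)) / 3 = 2 / 3 := by
  rw [cornerAbscissa_eq_mul_two_sub hc]
  field_simp
  ring

lemma sub_cornerAbscissa (hc : 1 < c) :
    c - cornerAbscissa c = (c + √(c * (c - 1))) * (√(c / (c - 1)) / 3) := by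
  unfold cornerAbscissa
  linear_combination -sqrt_div_sub_one_mul_sub_one hc / 3 -
    sqrt_mul_sub_one_mul_sqrt_div_sub_one hc / 3

end Parameters

/-- Lemma on `R₃`: for `c > 4/3`, the boundary measure `ν₊` on
the hypotenuse part of `R₃` can be transported to the interior measure `ν₋`
moving mass only weakly downward and weakly leftward. -/
theorem exists_monotone_transport_R3 (c : ℝ) (hc : 4 / 3 < c) :
    let p3 : ℝ := 2 * c / 3 - Real.sqrt (c * (c - 1)) / 3
    let xD : ℝ := 2 * c / 3 - Real.sqrt (c * (c - 1)) / 3 - Real.sqrt (c / (c - 1)) / 3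
    let R3 : Set (ℝ × ℝ) :=
      {v ∈ Tri c | 0 ≤ v.1 + v.2 - p3 ∧ v.1 / c + v.2 - 2 / 3 ≤ v.1 + v.2 - p3}
    let νp : Measure (ℝ × ℝ) :=
      Measure.map (fun t : ℝ => (t, 1 - t / c))
        (ENNReal.ofReal (2 / c) • volume.restrict (Set.Icc xD c))
    let νm : Measure (ℝ × ℝ) := ENNReal.ofReal (6 / c) • volume.restrict R3
    ∃ γ : Measure ((ℝ × ℝ) × (ℝ × ℝ)),
      γ.map Prod.fst = νp ∧ γ.map Prod.snd = νm ∧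
      γ {w : (ℝ × ℝ) × (ℝ × ℝ) |
          ¬ (w.1 ∈ R3 ∧ w.2 ∈ R3 ∧ w.2.1 ≤ w.1.1 ∧ w.2.2 ≤ w.1.2)} = 0 := by
  intro p3 xD R3 νp νm
  have hc1 : 1 < c := by linarith
  have hedge := cornerAbscissa_div_add hc1
  have hxD : xD = cornerAbscissa c := rfl
  have hR3 : R3 = bundleRegion c (cornerAbscissa c) (√(c / (c - 1)) / 3) := by
    rw [← setOf_bundle_preferred_eq_bundleRegion hc1 (cornerAbscissa_nonneg hc) hedge,
      cornerAbscissa, sub_add_cancel]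
  have hmass : ENNReal.ofReal (2 / c) =
      ENNReal.ofReal (6 / c) * ENNReal.ofReal (1 - cornerAbscissa c / c - √(c / (c - 1)) / 3) := by
    rw [← ENNReal.ofReal_mul (by positivity)]
    congr 1
    linear_combination (6 / c) * hedge
  have hκ : 1 ≤ c + √(c * (c - 1)) := by linarith [Real.sqrt_nonneg (c * (c - 1))]
  simp only [νp, νm, hxD, hR3, hmass]
  exact exists_monotone_transport_bundleRegion hκ (add_sqrt_sq_add_eq hc1.le)
    (sub_cornerAbscissa hc1) (by positivity) _
end
end

section
/- Let c > 4/3 and p3 = (2c)/3 − (1/3)*sqrt(c*(c−1)). On the triangle T define the measures μ0 = Dirac point mass 1 at (0,0), μ∂ = pushforward of (2/c)·(Lebesgue measure on [0,c]) under t ↦ (t, 1 − t/c) (the boundary measure on the hypotenuse with line density 2/sqrt(1+c^2) per arclength), and μs = (6/c) times Lebesgue measure restricted to T. Partition T into R1 = {v ∈ T : 0 ≥ v1/c + v2 − 2/3 and 0 ≥ v1 + v2 − p3}, R2 = {v ∈ T : v1/c + v2 − 2/3 > 0 and v1/c + v2 − 2/3 ≥ v1 + v2 − p3}, and R3 = T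 \ (R1 ∪ R2) (the regions where the buyer prefers the items ((0,0),0), ((1/c,1),2/3), ((1,1),p3), respectively). Then the measures are balanced within each region: (μ0 + μ∂)(Ri) = μs(Ri) for each i ∈ {1,2,3}. -/
open MeasureTheory Real

noncomputable section

/-!
For a menu with prices `p` for the lottery `(1/c, 1)` and `q` for the grand bundle `(1, 1)`, the
areas of the regions are explicit. The opt-out region is a right triangle of area `c p² / 2` with a
corner of area `(c p - q)² / (2 (c - 1))` cut off, so for `p = 2/3` it carries mass `1` exactly when
`(2c/3 - q)² = c (c - 1) / 9`, which is the equation solved by the optimal bundle price. The lottery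
region is a band of constant vertical width `1 - p` below the hypotenuse, so `p = 2/3` balances
it whatever `q` is. Both areas presuppose `p ≤ q ≤ c p`, and for `c > 1` the optimal price satisfies
`2/3 ≤ p₃` iff `4/3 ≤ c`. The last region is balanced because the whole triangle is.
-/

section Measure

variable {α β : Type*} [MeasurableSpace α] [MeasurableSpace β]

lemma prod_eq_ofReal_setIntegral_of_slices {μ : Measure α} {ν : Measure β} [SFinite ν]
    {A : Set (α × β)} {s : Set α} {h : α → ℝ} (hA : MeasurableSet A) (hs : MeasurableSet s)
    (hAs : ∀ v ∈ A, v.1 ∈ s) (h_int : IntegrableOn h s μ) (h_nonneg : ∀ x ∈ s, 0 ≤ h x)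
    (h_slice : ∀ x ∈ s, ν (Prod.mk x ⁻¹' A) = ENNReal.ofReal (h x)) :
    μ.prod ν A = ENNReal.ofReal (∫ x in s, h x ∂μ) := by
  have slice_eq : (fun x => ν (Prod.mk x ⁻¹' A)) =
      s.indicator fun x => ENNReal.ofReal (h x) := by
    funext x
    by_cases hx : x ∈ s
    · rw [Set.indicator_of_mem hx, h_slice x hx]
    · have slice_empty : Prod.mk x ⁻¹' A = ∅ :=
        Set.eq_empty_of_forall_notMem fun y hy => hx (hAs _ hy)
      rw [Set.indicator_of_notMem hx, slice_empty, measure_empty]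
  rw [Measure.prod_apply hA, slice_eq, lintegral_indicator hs,
    ofReal_integral_eq_lintegral_ofReal h_int ((ae_restrict_iff' hs).2 (.of_forall h_nonneg))]

lemma volume_eq_ofReal_intervalIntegral_of_slices {A : Set (ℝ × ℝ)} {a b : ℝ} {h : ℝ → ℝ}
    (hA : MeasurableSet A) (hab : a ≤ b) (hAs : ∀ v ∈ A, v.1 ∈ Set.Icc a b)
    (h_cont : ContinuousOn h (Set.Icc a b)) (h_nonneg : ∀ x ∈ Set.Icc a b, 0 ≤ h x)
    (h_slice : ∀ x ∈ Set.Icc a b, volume (Prod.mk x ⁻¹' A) = ENNReal.ofReal (h x)) :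
    volume A = ENNReal.ofReal (∫ x in a..b, h x) := by
  rw [Measure.volume_eq_prod, prod_eq_ofReal_setIntegral_of_slices hA measurableSet_Icc hAs
    h_cont.integrableOn_Icc h_nonneg h_slice, intervalIntegral.integral_of_le hab,
    integral_Icc_eq_integral_Ioc]

lemma measure_sdiff_union_congr {μ ν : Measure α} {T A B : Set α} (hA : MeasurableSet A)
    (hB : MeasurableSet B) (hAT : A ⊆ T) (hBT : B ⊆ T) (hAB : Disjoint A B) (hν : ν T ≠ ⊤)
    (hT_eq : μ T = ν T) (hA_eq : μ A = ν A) (hB_eq : μ B = ν B) :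
    μ (T \ (A ∪ B)) = ν (T \ (A ∪ B)) := by
  have union_subset : A ∪ B ⊆ T := Set.union_subset hAT hBT
  have union_eq : μ (A ∪ B) = ν (A ∪ B) := by
    rw [measure_union hAB hB, measure_union hAB hB, hA_eq, hB_eq]
  have union_ne_top : ν (A ∪ B) ≠ ⊤ := measure_ne_top_of_subset union_subset hν
  rw [measure_sdiff union_subset (hA.union hB).nullMeasurableSet (union_eq ▸ union_ne_top),
    measure_sdiff union_subset (hA.union hB).nullMeasurableSet union_ne_top, union_eq, hT_eq]

end Measure

lemma integral_const_sub_div (a b p m : ℝ) :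
    ∫ x in a..b, (p - x / m) = p * (b - a) - (b ^ 2 - a ^ 2) / (2 * m) := by
  rw [intervalIntegral.integral_sub (by simp) (Continuous.intervalIntegrable (by fun_prop) _ _),
    intervalIntegral.integral_const, intervalIntegral.integral_div, integral_id, smul_eq_mul]
  ring

/-- The measure `μ₀ + μ∂`: a unit atom at the lowest type plus the boundary mass on the
hypotenuse, which is parametrised by its first coordinate. -/
def sourceMeasure (c : ℝ) : Measure (ℝ × ℝ) :=
  Measure.dirac ((0 : ℝ), (0 : ℝ)) +
    Measure.map (fun t : ℝ => (t, 1 - t / c))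
      (ENNReal.ofReal (2 / c) • volume.restrict (Set.Icc (0 : ℝ) c))

/-- The measure `μs`, which has density `6 / c` on the triangle. -/
def sinkMeasure (c : ℝ) : Measure (ℝ × ℝ) :=
  ENNReal.ofReal (6 / c) • volume.restrict (Tri c)

/-- The types that buy nothing when the lottery `(1/c, 1)` costs `p` and the grand bundle `(1, 1)`
costs `q`. -/
def optOutRegion (c p q : ℝ) : Set (ℝ × ℝ) :=
  {v ∈ Tri c | v.1 / c + v.2 - p ≤ 0 ∧ v.1 + v.2 - q ≤ 0}

/-- The types that buy the lottery `(1/c, 1)` at price `p` when the grand bundle `(1, 1)`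
costs `q`; ties with the grand bundle go to the lottery, ties with opting out do not. -/
def lotteryRegion (c p q : ℝ) : Set (ℝ × ℝ) :=
  {v ∈ Tri c | 0 < v.1 / c + v.2 - p ∧ v.1 + v.2 - q ≤ v.1 / c + v.2 - p}

/-- The value of the first coordinate at which a type is indifferent between the lottery
`(1/c, 1)` at price `p` and the grand bundle `(1, 1)` at price `q`. -/
def indifferencePoint (c p q : ℝ) : ℝ := c * (q - p) / (c - 1)

/-- The price `p₃` of the grand bundle in the optimal menu. -/
def bundlePrice (c : ℝ) : ℝ := 2 * c / 3 - √(c * (c - 1)) / 3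

variable {c p q x : ℝ}

section Triangle

lemma measurableSet_tri : MeasurableSet (Tri c) := by
  unfold Tri
  measurability

lemma fst_mem_Icc_of_mem_tri (hc : 0 < c) {v : ℝ × ℝ} (hv : v ∈ Tri c) :
    v.1 ∈ Set.Icc 0 c := by
  obtain ⟨fst_nonneg, snd_nonneg, sum_le⟩ := hv
  exact ⟨fst_nonneg, (div_le_one hc).1 (by linarith)⟩

lemma slice_tri (hx : 0 ≤ x) : Prod.mk x ⁻¹' Tri c = Set.Icc 0 (1 - x / c) := by
  ext y
  simp [Tri, hx, le_sub_iff_add_le']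

lemma volume_tri (hc : 0 < c) : volume (Tri c) = ENNReal.ofReal (c / 2) := by
  rw [volume_eq_ofReal_intervalIntegral_of_slices (h := fun x => 1 - x / c) measurableSet_tri
    hc.le (fun _ => fst_mem_Icc_of_mem_tri hc) (by fun_prop)]
  · rw [integral_const_sub_div]
    congr 1
    field
  · exact fun x hx => sub_nonneg.2 ((div_le_one hc).2 hx.2)
  · intro x hx
    rw [slice_tri hx.1, Real.volume_Icc, sub_zero]

lemma hypotenuse_mem_tri (hc : 0 < c) {t : ℝ} (ht : t ∈ Set.Icc 0 c) :
    (t, 1 - t / c) ∈ Tri c :=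
  ⟨ht.1, sub_nonneg.2 ((div_le_one hc).2 ht.2), (add_sub_cancel _ _).le⟩

end Triangle

section IndifferencePoint

lemma bundle_line_sub_lottery_line (hc : 1 < c) :
    (q - x) - (p - x / c) = (c - 1) / c * (indifferencePoint c p q - x) := by
  have c_sub_one_ne : c - 1 ≠ 0 := (sub_pos.2 hc).ne'
  rw [indifferencePoint]
  field

lemma lottery_line_le_bundle_line_iff (hc : 1 < c) :
    p - x / c ≤ q - x ↔ x ≤ indifferencePoint c p q := by
  have slope_pos : 0 < (c - 1) / c := div_pos (sub_pos.2 hc) (by linarith)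
  rw [← sub_nonneg, bundle_line_sub_lottery_line hc, mul_nonneg_iff_of_pos_left slope_pos,
    sub_nonneg]

lemma bundle_line_le_lottery_line_iff (hc : 1 < c) :
    q - x ≤ p - x / c ↔ indifferencePoint c p q ≤ x := by
  have slope_pos : 0 < (c - 1) / c := div_pos (sub_pos.2 hc) (by linarith)
  rw [← sub_nonpos, bundle_line_sub_lottery_line hc, ← neg_nonneg, ← mul_neg,
    mul_nonneg_iff_of_pos_left slope_pos, neg_sub, sub_nonneg]

lemma indifferencePoint_nonneg (hc : 1 < c) (hpq : p ≤ q) : 0 ≤ indifferencePoint c p q :=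
  div_nonneg (mul_nonneg (by linarith) (sub_nonneg.2 hpq)) (sub_pos.2 hc).le

lemma indifferencePoint_le_bundle_price (hc : 1 < c) (hqp : q ≤ c * p) :
    indifferencePoint c p q ≤ q := by
  rw [indifferencePoint, div_le_iff₀ (sub_pos.2 hc)]
  linarith

lemma indifferencePoint_le_self (hc : 1 < c) (hpq : q - p ≤ c - 1) :
    indifferencePoint c p q ≤ c := by
  rw [indifferencePoint, div_le_iff₀ (sub_pos.2 hc)]
  gcongr

end IndifferencePoint

section OptOutRegion

lemma optOutRegion_subset_tri : optOutRegion c p q ⊆ Tri c := Set.sep_subset _ _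

lemma measurableSet_optOutRegion : MeasurableSet (optOutRegion c p q) := by
  unfold optOutRegion Tri
  measurability

lemma fst_mem_Icc_of_mem_optOutRegion {v : ℝ × ℝ} (hv : v ∈ optOutRegion c p q) :
    v.1 ∈ Set.Icc 0 q := by
  obtain ⟨⟨fst_nonneg, snd_nonneg, -⟩, -, bundle_le⟩ := hv
  exact ⟨fst_nonneg, by linarith⟩

lemma slice_optOutRegion (hp : p ≤ 1) (hx : 0 ≤ x) :
    Prod.mk x ⁻¹' optOutRegion c p q = Set.Icc 0 (min (p - x / c) (q - x)) := by
  ext y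
  simp only [optOutRegion, Tri, Set.mem_preimage, Set.mem_ofPred_eq, Set.mem_Icc, le_min_iff]
  constructor
  · rintro ⟨⟨-, y_nonneg, -⟩, lottery_le, bundle_le⟩
    exact ⟨y_nonneg, by linarith, by linarith⟩
  · rintro ⟨y_nonneg, le_lottery, le_bundle⟩
    exact ⟨⟨hx, y_nonneg, by linarith⟩, by linarith, by linarith⟩

lemma integral_min_lottery_line_bundle_line (hc : 1 < c) (hpq : p ≤ q) (hqp : q ≤ c * p) :
    ∫ x in (0 : ℝ)..q, min (p - x / c) (q - x) =
      c * p ^ 2 / 2 - (c * p - q) ^ 2 / (2 * (c - 1)) := by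
  set z := indifferencePoint c p q with hz
  have z_nonneg : 0 ≤ z := indifferencePoint_nonneg hc hpq
  have z_le : z ≤ q := indifferencePoint_le_bundle_price hc hqp
  have integral_left : ∫ x in (0 : ℝ)..z, min (p - x / c) (q - x) =
      ∫ x in (0 : ℝ)..z, (p - x / c) := by
    refine intervalIntegral.integral_congr fun x hx => min_eq_left ?_
    rw [Set.uIcc_of_le z_nonneg] at hx
    exact (lottery_line_le_bundle_line_iff hc).2 hx.2
  have integral_right : ∫ x in z..q, min (p - x / c) (q - x) = ∫ x in z..q, (q - x / 1) := by
    refine intervalIntegral.integral_congr fun x hx => ?_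
    rw [Set.uIcc_of_le z_le] at hx
    simpa only [div_one] using min_eq_right ((bundle_line_le_lottery_line_iff hc).2 hx.1)
  have c_sub_one_ne : c - 1 ≠ 0 := (sub_pos.2 hc).ne'
  rw [← intervalIntegral.integral_add_adjacent_intervals (b := z)
      (Continuous.intervalIntegrable (by fun_prop) _ _)
      (Continuous.intervalIntegrable (by fun_prop) _ _),
    integral_left, integral_right, integral_const_sub_div, integral_const_sub_div, hz,
    indifferencePoint]
  field

lemma volume_optOutRegion (hc : 1 < c) (hp : p ≤ 1) (hpq : p ≤ q) (hqp : q ≤ c * p) :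
    volume (optOutRegion c p q) =
      ENNReal.ofReal (c * p ^ 2 / 2 - (c * p - q) ^ 2 / (2 * (c - 1))) := by
  have c_pos : 0 < c := by linarith
  have q_nonneg : 0 ≤ q :=
    (indifferencePoint_nonneg hc hpq).trans (indifferencePoint_le_bundle_price hc hqp)
  rw [volume_eq_ofReal_intervalIntegral_of_slices (h := fun x => min (p - x / c) (q - x))
    measurableSet_optOutRegion q_nonneg (fun _ => fst_mem_Icc_of_mem_optOutRegion)
    (by fun_prop), integral_min_lottery_line_bundle_line hc hpq hqp]
  · intro x hx
    have div_le : x / c ≤ p := (div_le_iff₀' c_pos).2 (hx.2.trans hqp)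
    exact le_min (sub_nonneg.2 div_le) (sub_nonneg.2 hx.2)
  · intro x hx
    rw [slice_optOutRegion hp hx.1, Real.volume_Icc, sub_zero]

lemma zero_mem_optOutRegion (hp : 0 ≤ p) (hq : 0 ≤ q) : (0, 0) ∈ optOutRegion c p q := by
  simp [optOutRegion, Tri, hp, hq]

lemma hypotenuse_notMem_optOutRegion (hp : p < 1) (t : ℝ) :
    (t, 1 - t / c) ∉ optOutRegion c p q := by
  rintro ⟨-, lottery_le, -⟩
  linarith

end OptOutRegion

section LotteryRegion

lemma lotteryRegion_subset_tri : lotteryRegion c p q ⊆ Tri c := Set.sep_subset _ _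

lemma measurableSet_lotteryRegion : MeasurableSet (lotteryRegion c p q) := by
  unfold lotteryRegion Tri
  measurability

lemma disjoint_optOutRegion_lotteryRegion :
    Disjoint (optOutRegion c p q) (lotteryRegion c p q) :=
  Set.disjoint_left.2 fun _ h_optOut h_lottery => h_lottery.2.1.not_ge h_optOut.2.1

lemma mem_lotteryRegion_iff (hc : 1 < c) {v : ℝ × ℝ} :
    v ∈ lotteryRegion c p q ↔
      v ∈ Tri c ∧ p - v.1 / c < v.2 ∧ v.1 ≤ indifferencePoint c p q := by
  rw [← lottery_line_le_bundle_line_iff hc]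
  refine and_congr_right fun _ => and_congr ?_ ?_ <;> constructor <;> intro h <;> linarith

lemma slice_lotteryRegion (hc : 1 < c) (hx : x ∈ Set.Icc 0 (indifferencePoint c p q))
    (hxp : x / c ≤ p) :
    Prod.mk x ⁻¹' lotteryRegion c p q = Set.Ioc (p - x / c) (1 - x / c) := by
  ext y
  simp only [Set.mem_preimage, mem_lotteryRegion_iff hc, Tri, Set.mem_ofPred_eq, Set.mem_Ioc]
  constructor
  · rintro ⟨⟨-, -, le_hypotenuse⟩, lt_y, -⟩
    exact ⟨lt_y, by linarith⟩
  · rintro ⟨lt_y, le_hypotenuse⟩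
    exact ⟨⟨hx.1, by linarith, by linarith⟩, lt_y, hx.2⟩

lemma volume_lotteryRegion (hc : 1 < c) (hp : p ≤ 1) (hpq : p ≤ q) (hqp : q ≤ c * p) :
    volume (lotteryRegion c p q) = ENNReal.ofReal ((1 - p) * indifferencePoint c p q) := by
  have c_pos : 0 < c := by linarith
  rw [volume_eq_ofReal_intervalIntegral_of_slices (h := fun _ => 1 - p)
    measurableSet_lotteryRegion (indifferencePoint_nonneg hc hpq)
    (fun v hv => ⟨hv.1.1, ((mem_lotteryRegion_iff hc).1 hv).2.2⟩) continuousOn_const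
    (fun _ _ => sub_nonneg.2 hp)]
  · rw [intervalIntegral.integral_const, sub_zero, smul_eq_mul, mul_comm]
  · intro x hx
    have x_le : x ≤ c * p := hx.2.trans ((indifferencePoint_le_bundle_price hc hqp).trans hqp)
    rw [slice_lotteryRegion hc hx ((div_le_iff₀' c_pos).2 x_le), Real.volume_Ioc,
      sub_sub_sub_cancel_right]

lemma zero_notMem_lotteryRegion (hp : 0 ≤ p) : (0, 0) ∉ lotteryRegion c p q := by
  simp [lotteryRegion, hp]

lemma hypotenuse_mem_lotteryRegion_iff (hc : 1 < c) (hp : p < 1) {t : ℝ}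
    (ht : t ∈ Set.Icc 0 c) :
    (t, 1 - t / c) ∈ lotteryRegion c p q ↔ t ≤ indifferencePoint c p q := by
  simp [mem_lotteryRegion_iff hc, hypotenuse_mem_tri (zero_lt_one.trans hc) ht, hp]

end LotteryRegion

section Masses

lemma sourceMeasure_apply {R : Set (ℝ × ℝ)} (hR : MeasurableSet R) :
    sourceMeasure c R = R.indicator 1 (0, 0) +
      ENNReal.ofReal (2 / c) * volume ({t | (t, 1 - t / c) ∈ R} ∩ Set.Icc 0 c) := by
  have meas_hypotenuse : Measurable fun t : ℝ => (t, 1 - t / c) := by fun_prop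
  rw [sourceMeasure, Measure.add_apply, Measure.dirac_apply' _ hR,
    Measure.map_apply meas_hypotenuse hR, Measure.smul_apply,
    Measure.restrict_apply (meas_hypotenuse hR), smul_eq_mul]
  rfl

lemma sinkMeasure_apply_of_subset {R : Set (ℝ × ℝ)} (hR : R ⊆ Tri c) :
    sinkMeasure c R = ENNReal.ofReal (6 / c) * volume R := by
  rw [sinkMeasure, Measure.smul_apply, Measure.restrict_eq_self _ hR, smul_eq_mul]

lemma sourceMeasure_tri (hc : 0 < c) : sourceMeasure c (Tri c) = 3 := by
  have hypotenuse_inter : {t | (t, 1 - t / c) ∈ Tri c} ∩ Set.Icc 0 c = Set.Icc 0 c :=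
    Set.inter_eq_right.2 fun _ => hypotenuse_mem_tri hc
  have zero_mem : ((0 : ℝ), (0 : ℝ)) ∈ Tri c := by simp [Tri]
  rw [sourceMeasure_apply measurableSet_tri, hypotenuse_inter, Set.indicator_of_mem zero_mem,
    Real.volume_Icc, sub_zero, ← ENNReal.ofReal_mul (by positivity), div_mul_cancel₀ _ hc.ne',
    Pi.one_apply, ENNReal.ofReal_ofNat]
  norm_num

lemma sinkMeasure_tri (hc : 0 < c) : sinkMeasure c (Tri c) = 3 := by
  rw [sinkMeasure_apply_of_subset subset_rfl, volume_tri hc, ← ENNReal.ofReal_mul (by positivity),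
    show 6 / c * (c / 2) = 3 by field, ENNReal.ofReal_ofNat]

lemma sourceMeasure_optOutRegion (hp : 0 ≤ p) (hp_lt : p < 1) (hq : 0 ≤ q) :
    sourceMeasure c (optOutRegion c p q) = 1 := by
  simp [sourceMeasure_apply measurableSet_optOutRegion, zero_mem_optOutRegion hp hq,
    hypotenuse_notMem_optOutRegion hp_lt]

lemma sourceMeasure_lotteryRegion (hc : 1 < c) (hp : 0 ≤ p) (hp_lt : p < 1)
    (hpq : q - p ≤ c - 1) :
    sourceMeasure c (lotteryRegion c p q) =
      ENNReal.ofReal (2 / c * indifferencePoint c p q) := by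
  have hypotenuse_inter : {t | (t, 1 - t / c) ∈ lotteryRegion c p q} ∩ Set.Icc 0 c =
      Set.Icc 0 (indifferencePoint c p q) := by
    ext t
    constructor
    · rintro ⟨mem_lottery, ht⟩
      exact ⟨ht.1, (hypotenuse_mem_lotteryRegion_iff hc hp_lt ht).1 mem_lottery⟩
    · rintro ⟨t_nonneg, t_le⟩
      have ht : t ∈ Set.Icc 0 c := ⟨t_nonneg, t_le.trans (indifferencePoint_le_self hc hpq)⟩
      exact ⟨(hypotenuse_mem_lotteryRegion_iff hc hp_lt ht).2 t_le, ht⟩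
  rw [sourceMeasure_apply measurableSet_lotteryRegion, hypotenuse_inter,
    Set.indicator_of_notMem (zero_notMem_lotteryRegion hp), zero_add, Real.volume_Icc, sub_zero,
    ENNReal.ofReal_mul (by positivity)]

end Masses

section Balance

lemma sourceMeasure_optOutRegion_eq_sinkMeasure (hc : 1 < c) (hq_ge : 2 / 3 ≤ q)
    (hq_le : q ≤ c * (2 / 3)) (hq_sq : (c * (2 / 3) - q) ^ 2 = c * (c - 1) / 9) :
    sourceMeasure c (optOutRegion c (2 / 3) q) = sinkMeasure c (optOutRegion c (2 / 3) q) := by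
  have c_pos : 0 < c := by linarith
  have c_sub_one_ne : c - 1 ≠ 0 := (sub_pos.2 hc).ne'
  have area_eq : c * (2 / 3) ^ 2 / 2 - (c * (2 / 3) - q) ^ 2 / (2 * (c - 1)) = c / 6 := by
    rw [hq_sq]
    field
  rw [sourceMeasure_optOutRegion (by norm_num) (by norm_num) (by linarith),
    sinkMeasure_apply_of_subset optOutRegion_subset_tri,
    volume_optOutRegion hc (by norm_num) hq_ge hq_le, area_eq,
    ← ENNReal.ofReal_mul (div_nonneg (by norm_num) c_pos.le),
    show 6 / c * (c / 6) = 1 by field, ENNReal.ofReal_one]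

lemma sourceMeasure_lotteryRegion_eq_sinkMeasure (hc : 1 < c) (hq_ge : 2 / 3 ≤ q)
    (hq_le : q ≤ c * (2 / 3)) :
    sourceMeasure c (lotteryRegion c (2 / 3) q) =
      sinkMeasure c (lotteryRegion c (2 / 3) q) := by
  rw [sourceMeasure_lotteryRegion hc (by norm_num) (by norm_num) (by linarith),
    sinkMeasure_apply_of_subset lotteryRegion_subset_tri,
    volume_lotteryRegion hc (by norm_num) hq_ge hq_le, ← ENNReal.ofReal_mul (by positivity)]
  congr 1
  ring

end Balance

section BundlePrice

lemma two_thirds_le_bundlePrice (hc : 4 / 3 ≤ c) : 2 / 3 ≤ bundlePrice c := by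
  have sqrt_le : √(c * (c - 1)) ≤ 2 * (c - 1) :=
    Real.sqrt_le_iff.2 ⟨by linarith, by nlinarith⟩
  rw [bundlePrice]
  linarith

lemma bundlePrice_le : bundlePrice c ≤ c * (2 / 3) := by
  have := Real.sqrt_nonneg (c * (c - 1))
  rw [bundlePrice]
  linarith

lemma sq_sub_bundlePrice (hc : 1 ≤ c) :
    (c * (2 / 3) - bundlePrice c) ^ 2 = c * (c - 1) / 9 := by
  have sq_sqrt : √(c * (c - 1)) ^ 2 = c * (c - 1) :=
    Real.sq_sqrt (mul_nonneg (by linarith) (sub_nonneg.2 hc))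
  rw [bundlePrice]
  linear_combination sq_sqrt / 9

end BundlePrice

/-- for `c > 4/3`, the transformed measures `μ₀ + μ∂` and `μs`
of Daskalakis–Deckelbaum–Tzamos are balanced within each of the three
best-response regions `R₁, R₂, R₃` of the optimal menu. -/
theorem measures_balanced_in_regions (c : ℝ) (hc : 4 / 3 < c) :
    let p3 : ℝ := 2 * c / 3 - Real.sqrt (c * (c - 1)) / 3
    let μ0 : Measure (ℝ × ℝ) := Measure.dirac ((0 : ℝ), (0 : ℝ))
    let μb : Measure (ℝ × ℝ) :=
      Measure.map (fun t : ℝ => (t, 1 - t / c))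
        (ENNReal.ofReal (2 / c) • volume.restrict (Set.Icc (0 : ℝ) c))
    let μs : Measure (ℝ × ℝ) := ENNReal.ofReal (6 / c) • volume.restrict (Tri c)
    let R1 : Set (ℝ × ℝ) :=
      {v ∈ Tri c | v.1 / c + v.2 - 2 / 3 ≤ 0 ∧ v.1 + v.2 - p3 ≤ 0}
    let R2 : Set (ℝ × ℝ) :=
      {v ∈ Tri c | 0 < v.1 / c + v.2 - 2 / 3 ∧ v.1 + v.2 - p3 ≤ v.1 / c + v.2 - 2 / 3}
    let R3 : Set (ℝ × ℝ) := Tri c \ (R1 ∪ R2)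
    (μ0 + μb) R1 = μs R1 ∧ (μ0 + μb) R2 = μs R2 ∧ (μ0 + μb) R3 = μs R3 := by
  have one_lt_c : 1 < c := by linarith
  have price_ge : 2 / 3 ≤ bundlePrice c := two_thirds_le_bundlePrice hc.le
  have optOut_balanced := sourceMeasure_optOutRegion_eq_sinkMeasure one_lt_c price_ge
    bundlePrice_le (sq_sub_bundlePrice one_lt_c.le)
  have lottery_balanced :=
    sourceMeasure_lotteryRegion_eq_sinkMeasure one_lt_c price_ge bundlePrice_le
  have c_pos : 0 < c := by linarith
  have total_balanced : sourceMeasure c (Tri c) = sinkMeasure c (Tri c) :=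
    (sourceMeasure_tri c_pos).trans (sinkMeasure_tri c_pos).symm
  have sink_ne_top : sinkMeasure c (Tri c) ≠ ⊤ := by simp [sinkMeasure_tri c_pos]
  exact ⟨optOut_balanced, lottery_balanced,
    measure_sdiff_union_congr measurableSet_optOutRegion measurableSet_lotteryRegion
      optOutRegion_subset_tri lotteryRegion_subset_tri disjoint_optOutRegion_lotteryRegion
      sink_ne_top total_balanced optOut_balanced lottery_balanced⟩
end
end
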